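/- For all signs s₁, s₂, s₃ ∈ {+1, −1} and k = 1, 3, the model triple-point integrals satisfy I_X^{X′ₖ, s₁, s₂, s₃} = −I_X^{X′ₖ, s₁, −s₂, −s₃} = I_X^{X′ₖ, −s₁, −s₂, −s₃}. -/

import Mathlib

open MeasureTheory Filter Topology Set

noncomputable section

abbrev E2 : Type := EuclideanSpace ℝ (Fin 2)
abbrev E3 : Type := EuclideanSpace ℝ (Fin 3)
abbrev E4 : Type := EuclideanSpace ℝ (Fin 4)
abbrev E6 : Type := EuclideanSpace ℝ (Fin 6)

/-- The point of `ℝ³` with the given coordinates. -/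
def mk3 (x y z : ℝ) : E3 := (WithLp.equiv 2 (Fin 3 → ℝ)).symm ![x, y, z]

/-- The north pole `N = (0,0,1)` of `S² ⊆ ℝ³`. -/
def NP : E3 := mk3 0 0 1

/-- Projection of `ℝ³` onto the plane `N^⊥` (the first two coordinates). -/
def pr12 (v : E3) : ℝ × ℝ := (v 0, v 1)

/-- The `N`-coordinate. -/
def pr3 (v : E3) : ℝ := v 2

/-- `unitv v = v / ‖v‖`. -/
def unitv (v : E3) : E3 := ‖v‖⁻¹ • v

/-- Determinant of the projections to `N^⊥` of two vectors (first vector, then second). -/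
def cross2 (a b : E3) : ℝ := a 0 * b 1 - a 1 * b 0

/-- 3×3 determinant (scalar triple product); for `p ∈ S²` and `v, w` tangent to `S²` at
`p`, this is the value of the standard area form of `S²` at `p` on `(v, w)`. -/
def det3 (p v w : E3) : ℝ :=
  p 0 * (v 1 * w 2 - v 2 * w 1) - p 1 * (v 0 * w 2 - v 2 * w 0) +
    p 2 * (v 0 * w 1 - v 1 * w 0)

/-! ### Long knots and 3-component long links -/

/-- A long knot: a smooth embedding `ℝ ↪ ℝ³` which is standard outside `[-1,1]`. -/
def IsLongKnot (f : ℝ → E3) : Prop :=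
  ContDiff ℝ (⊤ : ℕ∞) f ∧ Function.Injective f ∧ (∀ t, deriv f t ≠ 0) ∧
    ∀ x : ℝ, 1 ≤ |x| → f x = mk3 x 0 0

/-- Smooth isotopy of long knots. -/
def KnotIsotopic (f₀ f₁ : ℝ → E3) : Prop :=
  ∃ H : ℝ → ℝ → E3,
    ContDiff ℝ (⊤ : ℕ∞) (fun p : ℝ × ℝ => H p.1 p.2) ∧
    (∀ s, IsLongKnot (H s)) ∧ H 0 = f₀ ∧ H 1 = f₁

/-- A 3-component long link: a smooth embedding `ℝ ⊔ ℝ ⊔ ℝ ↪ ℝ³`, standard outside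
`[-1,1]`, component `k` (for `k = 1,2,3`, i.e. index `i = k - 1 : Fin 3`) having ends
`x ↦ (x, (2 - k)|x|, 0)`. -/
def IsLongLink3 (f : Fin 3 → ℝ → E3) : Prop :=
  (∀ i, ContDiff ℝ (⊤ : ℕ∞) (f i)) ∧
  (∀ i j s t, f i s = f j t → i = j ∧ s = t) ∧
  (∀ i t, deriv (f i) t ≠ 0) ∧
  ∀ i (x : ℝ), 1 ≤ |x| → f i x = mk3 x ((1 - ((i : ℕ) : ℝ)) * |x|) 0

/-- Smooth isotopy of 3-component long links. -/
def LinkIsotopic (f₀ f₁ : Fin 3 → ℝ → E3) : Prop :=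
  ∃ H : ℝ → Fin 3 → ℝ → E3,
    (∀ i, ContDiff ℝ (⊤ : ℕ∞) (fun p : ℝ × ℝ => H p.1 i p.2)) ∧
    (∀ s, IsLongLink3 (H s)) ∧ H 0 = f₀ ∧ H 1 = f₁

/-! ### Diagrams, crossings and Gauss diagram pairings -/

/-- All self-intersections of the projection of the long knot `f` are transverse
(any two branches meeting at a multiple point have independent projected tangents). -/
def TransverseK (f : ℝ → E3) : Prop :=
  ∀ t u, t ≠ u → pr12 (f t) = pr12 (f u) → cross2 (deriv f t) (deriv f u) ≠ 0

/-- The diagram of `f` has only transverse double points. -/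
def OnlyDoubleK (f : ℝ → E3) : Prop :=
  TransverseK f ∧
  ∀ t u v : ℝ, t ≠ u → u ≠ v → t ≠ v →
    pr12 (f t) = pr12 (f u) → pr12 (f u) = pr12 (f v) → False

/-- All self-intersections of the projection of the long link `f` are transverse. -/
def TransverseL (f : Fin 3 → ℝ → E3) : Prop :=
  ∀ i j s t, (i, s) ≠ (j, t) → pr12 (f i s) = pr12 (f j t) →
    cross2 (deriv (f i) s) (deriv (f j) t) ≠ 0

/-- The diagram of the long link `f` has only transverse double points. -/
def OnlyDoubleL (f : Fin 3 → ℝ → E3) : Prop :=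
  TransverseL f ∧
  ∀ i j k s t u, (i, s) ≠ (j, t) → (j, t) ≠ (k, u) → (i, s) ≠ (k, u) →
    pr12 (f i s) = pr12 (f j t) → pr12 (f j t) = pr12 (f k u) → False

/-- Crossings of a long knot diagram: pairs `(t, u)` with `t` on the lower and `u` on the
upper strand; the corresponding chord of the Gauss diagram is directed from `t` to `u`. -/
def CrossingK (f : ℝ → E3) : Set (ℝ × ℝ) :=
  {p | p.1 ≠ p.2 ∧ pr12 (f p.1) = pr12 (f p.2) ∧ pr3 (f p.1) < pr3 (f p.2)}

/-- The sign of the crossing `p = (t, u)` (`+1` iff the projected tangent of the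
over-strand followed by that of the under-strand is a positive basis of `N^⊥`). -/
def csignK (f : ℝ → E3) (p : ℝ × ℝ) : ℝ :=
  Real.sign (cross2 (deriv f p.2) (deriv f p.1))

/-- Gauss diagram pairing for a long knot: the sum, over all pairs of chords of the Gauss
diagram of `f` in the relative position prescribed by `R`, of the products of signs. -/
def pairK (f : ℝ → E3) (R : ℝ × ℝ → ℝ × ℝ → Prop) : ℝ :=
  ∑ᶠ q ∈ {q : (ℝ × ℝ) × (ℝ × ℝ) | q.1 ∈ CrossingK f ∧ q.2 ∈ CrossingK f ∧ R q.1 q.2},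
    csignK f q.1 * csignK f q.2

/-- `⟨X, G_D⟩` : chords `x₁ → x₃` and `x₄ → x₂` with `x₁ < x₂ < x₃ < x₄`. -/
def pairXK (f : ℝ → E3) : ℝ :=
  pairK f fun p q => p.1 < q.2 ∧ q.2 < p.2 ∧ p.2 < q.1

/-- `⟨X′₁, G_D⟩` : chords `a → b` and `c → a` with `a < b < c`. -/
def pairX1K (f : ℝ → E3) : ℝ :=
  pairK f fun p q => q.2 = p.1 ∧ p.1 < p.2 ∧ p.2 < q.1

/-- `⟨X′₂, G_D⟩` : chords `a → b` and `c → b` with `a < b < c`. -/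
def pairX2K (f : ℝ → E3) : ℝ :=
  pairK f fun p q => q.2 = p.2 ∧ p.1 < p.2 ∧ p.2 < q.1

/-- `⟨X′₃, G_D⟩` : chords `a → c` and `c → b` with `a < b < c`. -/
def pairX3K (f : ℝ → E3) : ℝ :=
  pairK f fun p q => p.2 = q.1 ∧ p.1 < q.2 ∧ q.2 < p.2

/-- Crossings of a 3-strand diagram between strand `i` (under) and strand `j` (over);
the corresponding chord is directed from `p.1` on strand `i` to `p.2` on strand `j`. -/
def CrossingL (f : Fin 3 → ℝ → E3) (i j : Fin 3) : Set (ℝ × ℝ) :=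
  {p | pr12 (f i p.1) = pr12 (f j p.2) ∧ pr3 (f i p.1) < pr3 (f j p.2)}

/-- The sign of the crossing `p` between strand `i` (under) and strand `j` (over). -/
def csignL (f : Fin 3 → ℝ → E3) (i j : Fin 3) (p : ℝ × ℝ) : ℝ :=
  Real.sign (cross2 (deriv (f j) p.2) (deriv (f i) p.1))

/-- Gauss diagram pairing for a 3-component long link. -/
def pairL (f : Fin 3 → ℝ → E3) (i₁ j₁ i₂ j₂ : Fin 3) (R : ℝ × ℝ → ℝ × ℝ → Prop) : ℝ :=
  ∑ᶠ q ∈ {q : (ℝ × ℝ) × (ℝ × ℝ) |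
      q.1 ∈ CrossingL f i₁ j₁ ∧ q.2 ∈ CrossingL f i₂ j₂ ∧ R q.1 q.2},
    csignL f i₁ j₁ q.1 * csignL f i₂ j₂ q.2

/-- `⟨𝒳₁, G_D⟩` : a chord from `t` on strand 1 to strand 2, and a chord from strand 3 to
`t′` on strand 1, with `t < t′`. -/
def pairL1 (f : Fin 3 → ℝ → E3) : ℝ := pairL f 0 1 2 0 fun p q => p.1 < q.2

/-- `⟨𝒳₂, G_D⟩` : a chord from strand 1 to `u` on strand 2, and a chord from strand 3 to
`u′` on strand 2, with `u < u′`. -/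
def pairL2 (f : Fin 3 → ℝ → E3) : ℝ := pairL f 0 1 2 1 fun p q => p.2 < q.2

/-- `⟨𝒳₃, G_D⟩` : a chord from strand 1 to `v` on strand 3, and a chord from `v′` on
strand 3 to strand 2, with `v < v′`. -/
def pairL3 (f : Fin 3 → ℝ → E3) : ℝ := pairL f 0 2 2 1 fun p q => p.2 < q.1

/-- `⟨𝒳′₁, G_D⟩` : as `𝒳₁` but with `t = t′` (a triple point). -/
def pairL1' (f : Fin 3 → ℝ → E3) : ℝ := pairL f 0 1 2 0 fun p q => p.1 = q.2

/-- `⟨𝒳′₂, G_D⟩` : as `𝒳₂` but with `u = u′` (a triple point). -/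
def pairL2' (f : Fin 3 → ℝ → E3) : ℝ := pairL f 0 1 2 1 fun p q => p.2 = q.2

/-- `⟨𝒳′₃, G_D⟩` : as `𝒳₃` but with `v = v′` (a triple point). -/
def pairL3' (f : Fin 3 → ℝ → E3) : ℝ := pairL f 0 2 2 1 fun p q => p.2 = q.1

/-! ### The localized unit 2-form `η` on `S²` -/

/-- The action of a 2×2 matrix on `ℝ³ = ℝ² × ℝ`, acting on the first two coordinates. -/
def act2 (A : Matrix (Fin 2) (Fin 2) ℝ) (v : E3) : E3 :=
  mk3 (A 0 0 * v 0 + A 0 1 * v 1) (A 1 0 * v 0 + A 1 1 * v 1) (v 2)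

/-- `IsEtaForm ε g` says that `η = g · (standard area form of S²)` is a smooth 2-form on
`S²` such that: (i) `supp η` lies in the `ε`-neighbourhood of the north pole `N`;
(ii) `φ*η = det φ · η` for every `φ ∈ O(2) ⊆ O(3)` (since `φ* (area form) = det φ ·
(area form)`, this amounts to `g ∘ φ = g`); (iii) `∫_{S²} η = 1`, i.e. the integral of
`g` against the surface measure of `S²` is `1`. -/
def IsEtaForm (ε : ℝ) (g : E3 → ℝ) : Prop :=
  ContDiff ℝ (⊤ : ℕ∞) g ∧
  (∀ v : E3, ‖v‖ = 1 → g v ≠ 0 → ‖v - NP‖ < ε) ∧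
  (∀ A : Matrix (Fin 2) (Fin 2) ℝ, A * A.transpose = 1 →
    ∀ v : E3, ‖v‖ = 1 → g (act2 A v) = g v) ∧
  ∫ v : Metric.sphere (0 : E3) 1, g v ∂((volume : Measure E3).toSphere) = 1

/-! ### Configuration space integrals -/

/-- `i`-th partial derivative of a map `ℝⁿ → ℝ³`. -/
def pdv {n : ℕ} (h : EuclideanSpace ℝ (Fin n) → E3) (i : Fin n)
    (x : EuclideanSpace ℝ (Fin n)) : E3 :=
  fderiv ℝ h x (EuclideanSpace.single i 1)

/-- The pullback `h*η` (for `η = g · (area form)`) evaluated at the point `x` on the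
coordinate vectors `(e_i, e_j)`. -/
def form2 {n : ℕ} (g : E3 → ℝ) (h : EuclideanSpace ℝ (Fin n) → E3)
    (x : EuclideanSpace ℝ (Fin n)) (i j : Fin n) : ℝ :=
  g (h x) * det3 (h x) (pdv h i x) (pdv h j x)

/-- `(h*η ∧ k*η)(e₀, e₁, e₂, e₃)` at `x`. -/
def wedge22 (g : E3 → ℝ) (h k : E4 → E3) (x : E4) : ℝ :=
  (1 / 4) * ∑ σ : Equiv.Perm (Fin 4),
    ((Equiv.Perm.sign σ : ℤ) : ℝ) * form2 g h x (σ 0) (σ 1) * form2 g k x (σ 2) (σ 3)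

/-- `(h*η ∧ k*η ∧ l*η)(e₀, …, e₅)` at `x`. -/
def wedge222 (g : E3 → ℝ) (h k l : E6 → E3) (x : E6) : ℝ :=
  (1 / 8) * ∑ σ : Equiv.Perm (Fin 6),
    ((Equiv.Perm.sign σ : ℤ) : ℝ) * form2 g h x (σ 0) (σ 1) * form2 g k x (σ 2) (σ 3) *
      form2 g l x (σ 4) (σ 5)

/-- The configuration space `C_X = {x₁ < x₂ < x₃ < x₄}`. -/
def CX : Set E4 := {x | x 0 < x 1 ∧ x 1 < x 2 ∧ x 2 < x 3}

/-- The integrand `ω_X = h₁₃*η ∧ h₄₂*η` for a long knot. -/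
def omegaX (f : ℝ → E3) (g : E3 → ℝ) : E4 → ℝ :=
  wedge22 g (fun x => unitv (f (x 2) - f (x 0))) (fun x => unitv (f (x 1) - f (x 3)))

/-- The configuration space integral `I_X(f)` of a long knot. -/
def IX (f : ℝ → E3) (g : E3 → ℝ) : ℝ := ∫ x in CX, omegaX f g x

/-- The free point `x₄ ∈ ℝ³` in a `Y`-configuration `(x₁,x₂,x₃;x₄) ∈ ℝ³ × ℝ³ = ℝ⁶`. -/
def ptY (x : E6) : E3 := mk3 (x 3) (x 4) (x 5)

/-- The configuration space `C_Y(f)` for a long knot. -/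
def CY (f : ℝ → E3) : Set E6 :=
  {x | x 0 < x 1 ∧ x 1 < x 2 ∧ ptY x ≠ f (x 0) ∧ ptY x ≠ f (x 1) ∧ ptY x ≠ f (x 2)}

/-- The integrand `ω_Y = h₁₄*η ∧ h₄₂*η ∧ h₃₄*η` for a long knot. -/
def omegaY (f : ℝ → E3) (g : E3 → ℝ) : E6 → ℝ :=
  wedge222 g (fun x => unitv (ptY x - f (x 0))) (fun x => unitv (f (x 1) - ptY x))
    (fun x => unitv (ptY x - f (x 2)))

/-- The configuration space integral `I_Y(f)` of a long knot. -/
def IY (f : ℝ → E3) (g : E3 → ℝ) : ℝ := ∫ x in CY f, omegaY f g x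

def CL1 : Set E4 := {x | x 0 < x 1}
def CL2 : Set E4 := {x | x 1 < x 2}
def CL3 : Set E4 := {x | x 2 < x 3}

/-- The integrand of `I_{𝒳₁}(f)` for a 3-component long link. -/
def omegaL1 (f : Fin 3 → ℝ → E3) (g : E3 → ℝ) : E4 → ℝ :=
  wedge22 g (fun x => unitv (f 1 (x 2) - f 0 (x 0))) (fun x => unitv (f 2 (x 3) - f 0 (x 1)))

/-- The integrand of `I_{𝒳₂}(f)` for a 3-component long link. -/
def omegaL2 (f : Fin 3 → ℝ → E3) (g : E3 → ℝ) : E4 → ℝ :=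
  wedge22 g (fun x => unitv (f 1 (x 1) - f 0 (x 0))) (fun x => unitv (f 1 (x 2) - f 2 (x 3)))

/-- The integrand of `I_{𝒳₃}(f)` for a 3-component long link. -/
def omegaL3 (f : Fin 3 → ℝ → E3) (g : E3 → ℝ) : E4 → ℝ :=
  wedge22 g (fun x => unitv (f 2 (x 2) - f 0 (x 0))) (fun x => unitv (f 1 (x 1) - f 2 (x 3)))

/-- The configuration space integral `I_{𝒳₁}(f)`. -/
def IL1 (f : Fin 3 → ℝ → E3) (g : E3 → ℝ) : ℝ := ∫ x in CL1, omegaL1 f g x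

/-- The configuration space integral `I_{𝒳₂}(f)`. -/
def IL2 (f : Fin 3 → ℝ → E3) (g : E3 → ℝ) : ℝ := ∫ x in CL2, omegaL2 f g x

/-- The configuration space integral `I_{𝒳₃}(f)`. -/
def IL3 (f : Fin 3 → ℝ → E3) (g : E3 → ℝ) : ℝ := ∫ x in CL3, omegaL3 f g x

/-- The configuration space `C_𝒴(f)` for a 3-component long link. -/
def CYL (f : Fin 3 → ℝ → E3) : Set E6 :=
  {x | ptY x ≠ f 0 (x 0) ∧ ptY x ≠ f 1 (x 1) ∧ ptY x ≠ f 2 (x 2)}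

/-- The integrand `ω_𝒴 = h₁₄*η ∧ h₄₂*η ∧ h₃₄*η` for a 3-component long link. -/
def omegaYL (f : Fin 3 → ℝ → E3) (g : E3 → ℝ) : E6 → ℝ :=
  wedge222 g (fun x => unitv (ptY x - f 0 (x 0))) (fun x => unitv (f 1 (x 1) - ptY x))
    (fun x => unitv (ptY x - f 2 (x 2)))

/-- The configuration space integral `I_𝒴(f)`. -/
def ILY (f : Fin 3 → ℝ → E3) (g : E3 → ℝ) : ℝ := ∫ x in CYL f, omegaYL f g x

/-! ### Model triple points -/

/-- The affine parametrization `t ↦ a + t • v` of a straight segment. -/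
def seg (a v : E3) (t : ℝ) : E3 := a + t • v

/-- A model triple point: three straight segments `S₁, S₂, S₃` (indexed by `0, 1, 2`),
`S_k` parametrized by `seg (a k) (v k) : (-δ, δ) → ℝ³`, all parallel to the plane
`N^⊥`, whose projections to `N^⊥` meet pairwise transversely at the single common point
which is the projection of each midpoint `a k`, and with `S₂` higher than `S₁`, `S₃`. -/
def IsModelTriple (a v : Fin 3 → E3) : Prop :=
  (∀ k, v k 2 = 0) ∧ (∀ k, v k ≠ 0) ∧
  pr12 (a 0) = pr12 (a 1) ∧ pr12 (a 1) = pr12 (a 2) ∧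
  (∀ j k, j ≠ k → cross2 (v j) (v k) ≠ 0) ∧
  a 0 2 < a 1 2 ∧ a 2 2 < a 1 2

/-- A model triple point of type `(←, s₁, s₂, s₃)`: `S₁` passes over `S₃`, and the signs
of the crossings `S₁–S₃`, `S₁–S₂`, `S₂–S₃` are `s₁, s₂, s₃` respectively. -/
def ModelLeft (a v : Fin 3 → E3) (s1 s2 s3 : ℝ) : Prop :=
  IsModelTriple a v ∧ a 2 2 < a 0 2 ∧
  s1 = Real.sign (cross2 (v 0) (v 2)) ∧
  s2 = Real.sign (cross2 (v 1) (v 0)) ∧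
  s3 = Real.sign (cross2 (v 1) (v 2))

/-- A model triple point of type `(→, s₁, s₂, s₃)`: `S₃` passes over `S₁`, and the signs
of the crossings `S₁–S₃`, `S₁–S₂`, `S₂–S₃` are `s₁, s₂, s₃` respectively. -/
def ModelRight (a v : Fin 3 → E3) (s1 s2 s3 : ℝ) : Prop :=
  IsModelTriple a v ∧ a 0 2 < a 2 2 ∧
  s1 = Real.sign (cross2 (v 2) (v 0)) ∧
  s2 = Real.sign (cross2 (v 1) (v 0)) ∧
  s3 = Real.sign (cross2 (v 1) (v 2))

/-- The cube `(-δ, δ)⁴ ⊆ ℝ⁴`. -/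
def cube4 (δ : ℝ) : Set E4 := {x | ∀ i, |x i| < δ}

/-- The model configuration space integral `I_X^{X′₁}`: the two points `t₁ < t₂` lie on
`S₁`, the point `t₃` on `S₂` and the point `t₄` on `S₃`; the maps are
`h₁₃ = unit (f₂(t₃) - f₁(t₁))` and `h₄₂ = unit (f₁(t₂) - f₃(t₄))`. -/
def IX1model (a v : Fin 3 → E3) (δ : ℝ) (g : E3 → ℝ) : ℝ :=
  ∫ x in cube4 δ ∩ {x : E4 | x 0 < x 1},
    wedge22 g (fun x => unitv (seg (a 1) (v 1) (x 2) - seg (a 0) (v 0) (x 0)))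
      (fun x => unitv (seg (a 0) (v 0) (x 1) - seg (a 2) (v 2) (x 3))) x

/-- The model configuration space integral `I_X^{X′₂}` (`(X′₂, l)` for a model of type
`←`, `(X′₂, r)` for a model of type `→`): the two points `t₂ < t₃` lie on `S₂`, the
point `t₁` on `S₁` and the point `t₄` on `S₃`; the maps are
`h₁₃ = unit (f₂(t₃) - f₁(t₁))` and `h₄₂ = unit (f₂(t₂) - f₃(t₄))`. -/
def IX2model (a v : Fin 3 → E3) (δ : ℝ) (g : E3 → ℝ) : ℝ :=
  ∫ x in cube4 δ ∩ {x : E4 | x 1 < x 2},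
    wedge22 g (fun x => unitv (seg (a 1) (v 1) (x 2) - seg (a 0) (v 0) (x 0)))
      (fun x => unitv (seg (a 1) (v 1) (x 1) - seg (a 2) (v 2) (x 3))) x

/-- The model configuration space integral `I_X^{X′₃}`: the two points `t₃ < t₄` lie on
`S₃`, the point `t₁` on `S₁` and the point `t₂` on `S₂`; the maps are
`h₁₃ = unit (f₃(t₃) - f₁(t₁))` and `h₄₂ = unit (f₂(t₂) - f₃(t₄))`. -/
def IX3model (a v : Fin 3 → E3) (δ : ℝ) (g : E3 → ℝ) : ℝ :=
  ∫ x in cube4 δ ∩ {x : E4 | x 2 < x 3},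
    wedge22 g (fun x => unitv (seg (a 2) (v 2) (x 2) - seg (a 0) (v 0) (x 0)))
      (fun x => unitv (seg (a 1) (v 1) (x 1) - seg (a 2) (v 2) (x 3))) x

/-- The model `Y`-integral `I_Y^{s₁,s₂,s₃}` over `(-δ,δ)³ × ℝ³`: the point `t_k` lies on
`S_k` and `x₄ ∈ ℝ³` is free; the maps are `h₁₄ = unit (x₄ - f₁(t₁))`,
`h₄₂ = unit (f₂(t₂) - x₄)` and `h₃₄ = unit (x₄ - f₃(t₃))`. -/
def IYmodel (a v : Fin 3 → E3) (δ : ℝ) (g : E3 → ℝ) : ℝ :=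
  ∫ x in {x : E6 | |x 0| < δ ∧ |x 1| < δ ∧ |x 2| < δ ∧
      ptY x ≠ seg (a 0) (v 0) (x 0) ∧ ptY x ≠ seg (a 1) (v 1) (x 1) ∧
      ptY x ≠ seg (a 2) (v 2) (x 2)},
    wedge222 g (fun x => unitv (ptY x - seg (a 0) (v 0) (x 0)))
      (fun x => unitv (seg (a 1) (v 1) (x 1) - ptY x))
      (fun x => unitv (ptY x - seg (a 2) (v 2) (x 2))) x

/-- Near every (triple or higher) multiple point of the diagram, the strands of the long
knot `f` are straight segments parallel to the plane `N^⊥`. -/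
def StraightNearMultipleK (f : ℝ → E3) : Prop :=
  ∀ t u v : ℝ, t ≠ u → u ≠ v → t ≠ v →
    pr12 (f t) = pr12 (f u) → pr12 (f u) = pr12 (f v) →
    ∃ δ > (0 : ℝ), ∃ w : E3, w 2 = 0 ∧ ∀ s : ℝ, |s - t| < δ → f s = f t + (s - t) • w

/-- Near every (triple or higher) multiple point of the diagram, the strands of the long
link `f` are straight segments parallel to the plane `N^⊥`. -/
def StraightNearMultipleL (f : Fin 3 → ℝ → E3) : Prop :=
  ∀ (i j k : Fin 3) (t u v : ℝ), (i, t) ≠ (j, u) → (j, u) ≠ (k, v) → (i, t) ≠ (k, v) →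
    pr12 (f i t) = pr12 (f j u) → pr12 (f j u) = pr12 (f k v) →
    ∃ δ > (0 : ℝ), ∃ w : E3, w 2 = 0 ∧ ∀ s : ℝ, |s - t| < δ → f i s = f i t + (s - t) • w

/-! ### Closed 2-component links and the linking number -/

/-- A smooth loop in `ℝ³`, parametrized with period 1 and injective on a period. -/
def IsLoop (f : ℝ → E3) : Prop :=
  ContDiff ℝ (⊤ : ℕ∞) f ∧ (∀ t, f (t + 1) = f t) ∧ (∀ t, deriv f t ≠ 0) ∧
    ∀ s t : ℝ, f s = f t → ∃ n : ℤ, t - s = n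

/-- The diagram of the 2-component link `(f 0, f 1)` has only transverse double points. -/
def OnlyDouble2 (f : Fin 2 → ℝ → E3) : Prop :=
  (∀ i j s t, f i s ≠ f j t → pr12 (f i s) = pr12 (f j t) →
      cross2 (deriv (f i) s) (deriv (f j) t) ≠ 0) ∧
  ∀ i j k s t u, f i s ≠ f j t → f j t ≠ f k u → f i s ≠ f k u →
    pr12 (f i s) = pr12 (f j t) → pr12 (f j t) = pr12 (f k u) → False

/-- The crossings of the diagram at which `f₂` passes over `f₁` (one parameter period). -/
def Crossing12 (f₁ f₂ : ℝ → E3) : Set (ℝ × ℝ) :=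
  {p | p.1 ∈ Ico (0 : ℝ) 1 ∧ p.2 ∈ Ico (0 : ℝ) 1 ∧
    pr12 (f₁ p.1) = pr12 (f₂ p.2) ∧ pr3 (f₁ p.1) < pr3 (f₂ p.2)}

/-- The sum of the signs of the crossings of the diagram at which `f₂` passes over `f₁`;
this is the linking number `lk(f₁, f₂)`, i.e. the mapping degree of
`h : S¹ × S¹ → S²`. -/
def lkSum (f₁ f₂ : ℝ → E3) : ℝ :=
  ∑ᶠ p ∈ Crossing12 f₁ f₂, Real.sign (cross2 (deriv f₂ p.2) (deriv f₁ p.1))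

/-- The fundamental domain `[0,1) × [0,1)` of `S¹ × S¹`. -/
def sq01 : Set E2 := {x | x 0 ∈ Ico (0 : ℝ) 1 ∧ x 1 ∈ Ico (0 : ℝ) 1}

/-- `∫_{S¹×S¹} h*η` for `h(x₁,x₂) = unit (f₂(x₂) - f₁(x₁))`. -/
def lkIntegral (f₁ f₂ : ℝ → E3) (g : E3 → ℝ) : ℝ :=
  ∫ x in sq01, form2 g (fun x : E2 => unitv (f₂ (x 1) - f₁ (x 0))) x 0 1


/-! ### Proof of the symmetries -/

@[simp] lemma mk3_zero (x y z : ℝ) : mk3 x y z 0 = x := rfl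
@[simp] lemma mk3_one (x y z : ℝ) : mk3 x y z 1 = y := rfl
@[simp] lemma mk3_two (x y z : ℝ) : mk3 x y z 2 = z := rfl

lemma E3_ext {x y : E3} (h0 : x 0 = y 0) (h1 : x 1 = y 1) (h2 : x 2 = y 2) : x = y := by
  ext i
  fin_cases i
  · exact h0
  · exact h1
  · exact h2

/-- Pullback of the area form along `unit ∘ P` for an affine map `P`. -/
lemma form2_affine (g : E3 → ℝ) (P : E4 → E3) (L : E4 →L[ℝ] E3) (p : E3)
    (hP : ∀ x, P x = p + L x) (x : E4) (hx : P x ≠ 0) (i j : Fin 4) :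
    form2 g (fun x => unitv (P x)) x i j = g (unitv (P x)) *
      (‖P x‖⁻¹ ^ 3 * det3 (P x) (L (EuclideanSpace.single i 1))
        (L (EuclideanSpace.single j 1))) := by
  have hPd : HasFDerivAt P L x := by
    have : P = fun x => p + L x := funext hP
    rw [this]
    exact L.hasFDerivAt.const_add p
  have hc : DifferentiableAt ℝ (fun x => ‖P x‖⁻¹) x :=
    (hPd.differentiableAt.norm ℝ hx).inv (norm_ne_zero_iff.2 hx)
  have hu := hc.hasFDerivAt.smul hPd
  have hpdv : ∀ k, pdv (fun x => unitv (P x)) k x =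
      ‖P x‖⁻¹ • L (EuclideanSpace.single k 1) +
        (fderiv ℝ (fun x => ‖P x‖⁻¹) x (EuclideanSpace.single k 1)) • P x := by
    intro k
    unfold pdv
    have : fderiv ℝ (fun x => unitv (P x)) x = _ := hu.fderiv
    rw [this]
    simp
  unfold form2
  rw [hpdv, hpdv]
  congr 1
  generalize fderiv ℝ (fun x => ‖P x‖⁻¹) x (EuclideanSpace.single i 1) = α
  generalize fderiv ℝ (fun x => ‖P x‖⁻¹) x (EuclideanSpace.single j 1) = β
  simp only [det3, unitv, PiLp.add_apply, PiLp.smul_apply, smul_eq_mul]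
  ring

/-- Signs of the ordered pairs `(a, b)`, `(b, a)`. -/
def pairSign (a b i j : Fin 4) : ℤ :=
  if i = a ∧ j = b then 1 else if i = b ∧ j = a then -1 else 0

lemma perm_sum : ∑ σ : Equiv.Perm (Fin 4), (Equiv.Perm.sign σ : ℤ) *
    pairSign 0 2 (σ 0) (σ 1) * pairSign 1 3 (σ 2) (σ 3) = -4 := by
  decide +kernel

lemma wedge22_of_pair (g : E3 → ℝ) (h k : E4 → E3) (x : E4) (A B : ℝ)
    (hA : ∀ i j, form2 g h x i j = A * pairSign 0 2 i j)
    (hB : ∀ i j, form2 g k x i j = B * pairSign 1 3 i j) :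
    wedge22 g h k x = -(A * B) := by
  unfold wedge22
  have : ∀ σ : Equiv.Perm (Fin 4), ((Equiv.Perm.sign σ : ℤ) : ℝ) *
      form2 g h x (σ 0) (σ 1) * form2 g k x (σ 2) (σ 3) =
      (A * B) * (((Equiv.Perm.sign σ : ℤ) *
        pairSign 0 2 (σ 0) (σ 1) * pairSign 1 3 (σ 2) (σ 3) : ℤ) : ℝ) := by
    intro σ
    rw [hA, hB]
    push_cast
    ring
  rw [Finset.sum_congr rfl (fun σ _ => this σ), ← Finset.mul_sum, ← Int.cast_sum, perm_sum]
  push_cast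
  ring

/-- The density of `η` in the gnomonic chart `(y, z) ↦ unit (y, z, 1)`. -/
def gno (g : E3 → ℝ) (y z : ℝ) : ℝ := g (unitv (mk3 y z 1)) * ‖mk3 y z 1‖⁻¹ ^ 3

/-- The vector of height `H` with the horizontal part a combination of two vectors. -/
def vec (H : ℝ) (u u' : E3) (s t : ℝ) : E3 := (mk3 0 0 H + s • u) + (t • u' : E3)

lemma vec_eq {H : ℝ} (hH : 0 < H) {u u' : E3} (hu : u 2 = 0) (hu' : u' 2 = 0) (s t : ℝ) :
    vec H u u' s t =
      H • mk3 ((s * u 0 + t * u' 0) / H) ((s * u 1 + t * u' 1) / H) 1 := by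
  apply E3_ext <;> simp [vec, hu, hu'] <;> field_simp

lemma vec_ne {H : ℝ} (hH : 0 < H) {u u' : E3} (hu : u 2 = 0) (hu' : u' 2 = 0) (s t : ℝ) :
    vec H u u' s t ≠ 0 := by
  intro h
  have := congrArg (fun v : E3 => v 2) h
  simp [vec, hu, hu'] at this
  exact hH.ne' this

lemma unitv_smul {H : ℝ} (hH : 0 < H) (w : E3) : unitv (H • w) = unitv w := by
  unfold unitv
  rw [norm_smul, Real.norm_of_nonneg hH.le, smul_smul]
  congr 1
  field_simp

lemma gno_vec (g : E3 → ℝ) {H : ℝ} (hH : 0 < H) {u u' : E3} (hu : u 2 = 0) (hu' : u' 2 = 0)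
    (s t : ℝ) :
    g (unitv (vec H u u' s t)) * (‖vec H u u' s t‖⁻¹ ^ 3 * (H * cross2 u u')) =
      cross2 u u' / H ^ 2 * gno g ((s * u 0 + t * u' 0) / H) ((s * u 1 + t * u' 1) / H) := by
  rw [vec_eq hH hu hu', unitv_smul hH, norm_smul, Real.norm_of_nonneg hH.le]
  unfold gno
  rw [mul_inv, mul_pow]
  field_simp

lemma form2_vec (g : E3 → ℝ) {H : ℝ} (hH : 0 < H) {u u' : E3} (hu : u 2 = 0) (hu' : u' 2 = 0)
    (a b : Fin 4) (hab : a ≠ b) (x : E4) (i j : Fin 4) :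
    form2 g (fun x : E4 => unitv (vec H u u' (x a) (x b))) x i j =
      (cross2 u u' / H ^ 2 * gno g ((x a * u 0 + x b * u' 0) / H)
        ((x a * u 1 + x b * u' 1) / H)) * pairSign a b i j := by
  let L : E4 →L[ℝ] E3 := (EuclideanSpace.proj a : E4 →L[ℝ] ℝ).smulRight u +
    (EuclideanSpace.proj b : E4 →L[ℝ] ℝ).smulRight u'
  have hL : ∀ y : E4, L y = y a • u + y b • u' := fun y => by simp [L]
  rw [form2_affine g (fun x : E4 => vec H u u' (x a) (x b)) L (mk3 0 0 H)
    (fun y => by rw [hL, vec, add_assoc]) x (vec_ne hH hu hu' _ _), ← gno_vec g hH hu hu',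
    mul_assoc, mul_assoc]
  congr 2
  rw [hL, hL]
  have key : ∀ c d e f : ℝ, det3 (vec H u u' (x a) (x b)) (c • u + d • u') (e • u + f • u') =
      H * cross2 u u' * (c * f - d * e) := by
    intro c d e f
    simp [det3, vec, cross2, hu, hu']
    ring
  rw [key]
  congr 1
  clear key hL L
  simp only [PiLp.single_apply, pairSign]
  clear hu hu' hH
  by_cases h1 : i = a <;> by_cases h2 : i = b <;> by_cases h3 : j = a <;> by_cases h4 : j = b <;>
    subst_vars <;> simp_all [eq_comm]

/-- Model-independent integral. -/
def Phi (g : E3 → ℝ) (y : E4) : ℝ := gno g (y 0) (y 2) * gno g (y 1) (y 3)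

/-- The matrix of the gnomonic change of coordinates. -/
def Mat (H H' : ℝ) (u u' w w' : E3) : Matrix (Fin 4) (Fin 4) ℝ :=
  !![u 0 / H, 0, u' 0 / H, 0;
     0, w 0 / H', 0, w' 0 / H';
     u 1 / H, 0, u' 1 / H, 0;
     0, w 1 / H', 0, w' 1 / H']

lemma Mat_det (H H' : ℝ) (u u' w w' : E3) :
    (Mat H H' u u' w w').det = cross2 u u' / H ^ 2 * (cross2 w w' / H' ^ 2) := by
  simp [Mat, Matrix.det_succ_row_zero, Fin.sum_univ_succ, cross2, Fin.succAbove]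
  ring

lemma wedge_vec (g : E3 → ℝ) {H H' : ℝ} (hH : 0 < H) (hH' : 0 < H') {u u' w w' : E3}
    (hu : u 2 = 0) (hu' : u' 2 = 0) (hw : w 2 = 0) (hw' : w' 2 = 0) (x : E4) :
    wedge22 g (fun x : E4 => unitv (vec H u u' (x 0) (x 2)))
      (fun x : E4 => unitv (vec H' w w' (x 1) (x 3))) x =
    -((Mat H H' u u' w w').det *
      Phi g (Matrix.toLpLin 2 2 (Mat H H' u u' w w') x)) := by
  rw [wedge22_of_pair _ _ _ _ _ _ (form2_vec g hH hu hu' 0 2 (by decide) x)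
    (form2_vec g hH' hw hw' 1 3 (by decide) x), Mat_det]
  have e0 : (Matrix.toLpLin 2 2 (Mat H H' u u' w w') x) 0 = (x 0 * u 0 + x 2 * u' 0) / H := by
    simp [Matrix.toLpLin_apply, Mat, Matrix.mulVec, dotProduct, Fin.sum_univ_succ]
    ring
  have e1 : (Matrix.toLpLin 2 2 (Mat H H' u u' w w') x) 1 = (x 1 * w 0 + x 3 * w' 0) / H' := by
    simp [Matrix.toLpLin_apply, Mat, Matrix.mulVec, dotProduct, Fin.sum_univ_succ]
    ring_nf
  have e2 : (Matrix.toLpLin 2 2 (Mat H H' u u' w w') x) 2 = (x 0 * u 1 + x 2 * u' 1) / H := by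
    simp [Matrix.toLpLin_apply, Mat, Matrix.mulVec, dotProduct, Fin.sum_univ_succ]
    ring
  have e3 : (Matrix.toLpLin 2 2 (Mat H H' u u' w w') x) 3 = (x 1 * w 1 + x 3 * w' 1) / H' := by
    simp [Matrix.toLpLin_apply, Mat, Matrix.mulVec, dotProduct, Fin.sum_univ_succ]
    ring_nf
  unfold Phi
  rw [e0, e1, e2, e3]
  ring

lemma integral_linear (M : Matrix (Fin 4) (Fin 4) ℝ) (hM : M.det ≠ 0) (F : E4 → ℝ) :
    ∫ x, M.det * F (Matrix.toLpLin 2 2 M x) = Real.sign M.det * ∫ y, F y := by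
  have hdet : LinearMap.det (Matrix.toLpLin 2 2 M) = M.det := LinearMap.det_toLpLin 2 M
  have hd : LinearMap.det (Matrix.toLpLin 2 2 M) ≠ 0 := by rwa [hdet]
  have hme : MeasurableEmbedding (Matrix.toLpLin 2 2 M : E4 → E4) :=
    (LinearMap.equivOfDetNeZero _ hd).toContinuousLinearEquiv.toHomeomorph.measurableEmbedding
  have h := Measure.map_linearMap_addHaar_eq_smul_addHaar (volume : Measure E4) hd
  have h2 := hme.integral_map (μ := volume) F
  rw [h, integral_smul_measure, hdet, ENNReal.toReal_ofReal (abs_nonneg _), smul_eq_mul] at h2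
  rw [integral_const_mul, ← h2, ← mul_assoc]
  congr 1
  rcases lt_or_gt_of_ne hM with h0 | h0
  · rw [Real.sign_of_neg h0, abs_inv, abs_of_neg h0]
    field_simp
  · rw [Real.sign_of_pos h0, abs_inv, abs_of_pos h0]
    field_simp

lemma integral_half (F : E4 → ℝ) (hF : ∀ x, F (-x) = F x) (i j : Fin 4) (hij : i ≠ j) :
    ∫ x in {x : E4 | x i < x j}, F x = 1 / 2 * ∫ x, F x := by
  set A : Set E4 := {x : E4 | x i < x j} with hA
  have hAm : MeasurableSet A := (isOpen_lt (by fun_prop) (by fun_prop)).measurableSet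
  have hnull : (volume : Measure E4) {x : E4 | x i = x j} = 0 := by
    let l : E4 →ₗ[ℝ] ℝ := (EuclideanSpace.proj i - EuclideanSpace.proj j : E4 →L[ℝ] ℝ)
    have hl : ∀ x, l x = x i - x j := fun x => by simp [l]
    have h := Measure.addHaar_submodule (volume : Measure E4) (LinearMap.ker l) (by
      intro h
      have : EuclideanSpace.single i (1 : ℝ) ∈ LinearMap.ker l := by rw [h]; trivial
      rw [LinearMap.mem_ker, hl] at this
      simp [hij.symm] at this)
    convert h using 2
    ext x
    simp [hl, sub_eq_zero]
  have hneg : (Aᶜ : Set E4) =ᵐ[volume] (Neg.neg ⁻¹' A : Set E4) := by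
    have : ∀ᵐ x : E4, ¬ (x i = x j) := by
      rw [ae_iff]; simpa using hnull
    filter_upwards [this] with x hx
    apply propext
    change ¬ (x i < x j) ↔ (-x) i < (-x) j
    simp only [PiLp.neg_apply, neg_lt_neg_iff, not_lt]
    exact ⟨fun h => lt_of_le_of_ne h (Ne.symm hx), le_of_lt⟩
  have hmp : MeasurePreserving (Neg.neg : E4 → E4) volume volume :=
    Measure.measurePreserving_neg volume
  have hme : MeasurableEmbedding (Neg.neg : E4 → E4) := (MeasurableEquiv.neg E4).measurableEmbedding
  have hFF : (F ∘ Neg.neg) = F := funext hF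
  have e1 : ∫ x in Aᶜ, F x = ∫ x in A, F x := by
    rw [setIntegral_congr_set hneg, ← hmp.setIntegral_preimage_emb hme F A]
    simp only [hF]
  by_cases hi : IntegrableOn F A
  · have hi2 : IntegrableOn F Aᶜ := by
      rw [integrableOn_congr_set_ae hneg]
      have := (hmp.integrableOn_comp_preimage hme (f := F) (s := A)).2 hi
      rwa [hFF] at this
    have : Integrable F := by
      rw [← integrableOn_univ, ← union_compl_self A]
      exact hi.union hi2
    rw [← integral_add_compl hAm this, e1]
    ring
  · rw [integral_undef hi, integral_undef (fun h => hi h.integrableOn)]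
    simp

lemma abs_coord_le (w : E3) (i : Fin 3) : |w i| ≤ ‖w‖ := by
  simpa using PiLp.norm_apply_le w i

lemma supp_bound {H : ℝ} (hH : 0 < H) {u u' : E3} (hu : u 2 = 0) (hu' : u' 2 = 0)
    (hc : cross2 u u' ≠ 0) {δ : ℝ} (hδ : 0 < δ) :
    ∃ ε₀ > (0 : ℝ), ∀ s t : ℝ, ‖unitv (vec H u u' s t) - NP‖ < ε₀ → |s| < δ ∧ |t| < δ := by
  set K : ℝ := 2 * H * (|u 0| + |u 1| + |u' 0| + |u' 1| + 1) with hK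
  have hKpos : 0 < K := by positivity
  have hcp : 0 < |cross2 u u'| := abs_pos.2 hc
  refine ⟨min (1 / 2) (δ * |cross2 u u'| / K), by positivity, ?_⟩
  intro s t hst
  set ε := min (1 / 2) (δ * |cross2 u u'| / K) with hε
  have hε1 : ε ≤ 1 / 2 := min_le_left _ _
  have hε2 : ε * K ≤ δ * |cross2 u u'| := by
    rw [← le_div_iff₀ hKpos]; exact min_le_right _ _
  have hε0 : 0 < ε := by positivity
  set P := vec H u u' s t with hP
  have hPn : 0 < ‖P‖ := norm_pos_iff.2 (vec_ne hH hu hu' s t)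
  have P0 : P 0 = s * u 0 + t * u' 0 := by simp [hP, vec]
  have P1 : P 1 = s * u 1 + t * u' 1 := by simp [hP, vec]
  have P2 : P 2 = H := by simp [hP, vec, hu, hu']
  have k0 := (abs_coord_le (unitv P - NP) 0).trans_lt hst
  have k1 := (abs_coord_le (unitv P - NP) 1).trans_lt hst
  have k2 := (abs_coord_le (unitv P - NP) 2).trans_lt hst
  simp only [unitv, NP, PiLp.sub_apply, PiLp.smul_apply, smul_eq_mul, mk3_zero, mk3_one, mk3_two,
    sub_zero, abs_mul, abs_inv, abs_norm] at k0 k1 k2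
  rw [P2] at k2
  have k2' := (abs_lt.1 k2).1
  have hn : ‖P‖ < 2 * H := by
    have : 1 / 2 < ‖P‖⁻¹ * H := by linarith
    rw [inv_mul_eq_div, lt_div_iff₀ hPn] at this
    linarith
  rw [inv_mul_eq_div, div_lt_iff₀ hPn] at k0 k1
  have k0' : |P 0| ≤ ε * (2 * H) := k0.le.trans (by gcongr)
  have k1' : |P 1| ≤ ε * (2 * H) := k1.le.trans (by gcongr)
  have bound : ∀ (z : E3) (r : ℝ), |z 0| + |z 1| < |u 0| + |u 1| + |u' 0| + |u' 1| + 1 →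
      r * cross2 u u' = P 0 * z 1 - P 1 * z 0 → |r| < δ := by
    intro z r hz hr
    have h1 : |r| * |cross2 u u'| ≤ ε * (2 * H) * (|z 0| + |z 1|) := by
      rw [← abs_mul, hr]
      calc |P 0 * z 1 - P 1 * z 0| ≤ |P 0 * z 1| + |P 1 * z 0| := abs_sub _ _
        _ = |P 0| * |z 1| + |P 1| * |z 0| := by rw [abs_mul, abs_mul]
        _ ≤ ε * (2 * H) * |z 1| + ε * (2 * H) * |z 0| := by gcongr
        _ = _ := by ring
    have h2 : ε * (2 * H) * (|z 0| + |z 1|) < ε * K := by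
      rw [hK, mul_assoc ε]
      gcongr
    have h3 : |r| * |cross2 u u'| < δ * |cross2 u u'| := by linarith
    exact lt_of_mul_lt_mul_right h3 hcp.le
  have q0 := abs_nonneg (u 0)
  have q1 := abs_nonneg (u 1)
  have q2 := abs_nonneg (u' 0)
  have q3 := abs_nonneg (u' 1)
  constructor
  · apply bound u' s (by linarith)
    rw [P0, P1, cross2]; ring
  · apply bound (-u) t (by simp only [PiLp.neg_apply, abs_neg]; linarith)
    rw [P0, P1, cross2]; simp only [PiLp.neg_apply]; ring

lemma norm_unitv {w : E3} (hw : w ≠ 0) : ‖unitv w‖ = 1 := by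
  unfold unitv
  rw [norm_smul, norm_inv, norm_norm, inv_mul_cancel₀ (norm_ne_zero_iff.2 hw)]

lemma norm_mk3_neg (y z : ℝ) : ‖mk3 (-y) (-z) 1‖ = ‖mk3 y z 1‖ := by
  simp [EuclideanSpace.norm_eq, Fin.sum_univ_succ, mk3]

lemma mk3_ne (y z : ℝ) : mk3 y z 1 ≠ 0 := by
  intro h
  have := congrArg (fun v : E3 => v 2) h
  simp at this

lemma gno_neg {ε : ℝ} {g : E3 → ℝ} (hg : IsEtaForm ε g) (y z : ℝ) :
    gno g (-y) (-z) = gno g y z := by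
  unfold gno
  rw [norm_mk3_neg]
  congr 1
  have h := hg.2.2.1 (-1) (by simp) (unitv (mk3 y z 1)) (norm_unitv (mk3_ne y z))
  rw [← h]
  congr 1
  unfold unitv
  rw [norm_mk3_neg]
  apply E3_ext <;> simp [act2]

lemma Phi_neg {ε : ℝ} {g : E3 → ℝ} (hg : IsEtaForm ε g) (y : E4) : Phi g (-y) = Phi g y := by
  simp only [Phi, PiLp.neg_apply, gno_neg hg]

/-- The value of all model integrals. -/
lemma main_integral {H H' : ℝ} (hH : 0 < H) (hH' : 0 < H') {u u' w w' : E3}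
    (hu : u 2 = 0) (hu' : u' 2 = 0) (hw : w 2 = 0) (hw' : w' 2 = 0)
    (hc : cross2 u u' ≠ 0) (hc' : cross2 w w' ≠ 0) {δ : ℝ} (hδ : 0 < δ)
    (i j : Fin 4) (hij : i ≠ j) :
    ∃ ε₀ > (0 : ℝ), ∀ ε : ℝ, 0 < ε → ε < ε₀ → ∀ g : E3 → ℝ, IsEtaForm ε g →
      ∫ x in cube4 δ ∩ {x : E4 | x i < x j},
        wedge22 g (fun x : E4 => unitv (vec H u u' (x 0) (x 2)))
          (fun x : E4 => unitv (vec H' w w' (x 1) (x 3))) x =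
      -(1 / 2 * (Real.sign (cross2 u u') * Real.sign (cross2 w w') * ∫ y, Phi g y)) := by
  obtain ⟨e1, he1, b1⟩ := supp_bound hH hu hu' hc hδ
  obtain ⟨e2, he2, b2⟩ := supp_bound hH' hw hw' hc' hδ
  refine ⟨min e1 e2, lt_min he1 he2, ?_⟩
  intro ε hε hε0 g hg
  set M := Mat H H' u u' w w' with hM
  have hdet : M.det = cross2 u u' / H ^ 2 * (cross2 w w' / H' ^ 2) := Mat_det H H' u u' w w'
  have hdet0 : M.det ≠ 0 := by rw [hdet]; positivity
  have hsign : Real.sign M.det = Real.sign (cross2 u u') * Real.sign (cross2 w w') := by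
    have p1 : 0 < (H ^ 2 * H' ^ 2)⁻¹ := by positivity
    have : M.det = (H ^ 2 * H' ^ 2)⁻¹ * (cross2 u u' * cross2 w w') := by
      rw [hdet]; field_simp
    rw [this]
    rcases lt_or_gt_of_ne hc with h | h <;> rcases lt_or_gt_of_ne hc' with h' | h'
    · rw [Real.sign_of_neg h, Real.sign_of_neg h',
        Real.sign_of_pos (mul_pos p1 (mul_pos_of_neg_of_neg h h'))]; norm_num
    · rw [Real.sign_of_neg h, Real.sign_of_pos h',
        Real.sign_of_neg (mul_neg_of_pos_of_neg p1 (mul_neg_of_neg_of_pos h h'))]; norm_num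
    · rw [Real.sign_of_pos h, Real.sign_of_neg h',
        Real.sign_of_neg (mul_neg_of_pos_of_neg p1 (mul_neg_of_pos_of_neg h h'))]; norm_num
    · rw [Real.sign_of_pos h, Real.sign_of_pos h',
        Real.sign_of_pos (mul_pos p1 (mul_pos h h'))]; norm_num
  have hSm : MeasurableSet {x : E4 | x i < x j} :=
    (isOpen_lt (by fun_prop) (by fun_prop)).measurableSet
  rw [← setIntegral_eq_of_subset_of_forall_sdiff_eq_zero hSm
    (inter_subset_right (s := cube4 δ))]
  · have hw2 := wedge_vec g hH hH' hu hu' hw hw'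
    simp only [hw2]
    rw [integral_neg, integral_half _ _ i j hij, integral_linear _ hdet0, hsign]
    intro x
    rw [map_neg, Phi_neg hg]
  · rintro x ⟨hx, hx'⟩
    rw [wedge22_of_pair _ _ _ _ _ _ (form2_vec g hH hu hu' 0 2 (by decide) x)
      (form2_vec g hH' hw hw' 1 3 (by decide) x), ← gno_vec g hH hu hu', ← gno_vec g hH' hw hw']
    by_cases g1 : g (unitv (vec H u u' (x 0) (x 2))) = 0
    · rw [g1]; ring
    by_cases g2 : g (unitv (vec H' w w' (x 1) (x 3))) = 0
    · rw [g2]; ring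
    exfalso
    have c1 := hg.2.1 _ (norm_unitv (vec_ne hH hu hu' _ _)) g1
    have c2 := hg.2.1 _ (norm_unitv (vec_ne hH' hw hw' _ _)) g2
    have d1 := b1 _ _ (c1.trans (hε0.trans_le (min_le_left _ _)))
    have d2 := b2 _ _ (c2.trans (hε0.trans_le (min_le_right _ _)))
    apply hx'
    refine ⟨?_, hx⟩
    intro k
    fin_cases k
    · exact d1.1
    · exact d2.1
    · exact d1.2
    · exact d2.2

lemma cross2_neg_left (a b : E3) : cross2 (-a) b = cross2 b a := by
  simp only [cross2, PiLp.neg_apply]; ring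

lemma cross2_neg_right (a b : E3) : cross2 a (-b) = -cross2 a b := by
  simp only [cross2, PiLp.neg_apply]; ring

lemma IX1_value (a v : Fin 3 → E3) (s1 s2 s3 δ : ℝ) (hδ : 0 < δ) (h : ModelLeft a v s1 s2 s3) :
    ∃ ε₀ > (0 : ℝ), ∀ ε : ℝ, 0 < ε → ε < ε₀ → ∀ g : E3 → ℝ, IsEtaForm ε g →
      IX1model a v δ g = 1 / 2 * (s1 * s2 * ∫ y, Phi g y) := by
  obtain ⟨⟨hv, -, h01, h12, hc, hl1, hl2⟩, hl, hs1, hs2, -⟩ := h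
  simp only [pr12, Prod.mk.injEq] at h01 h12
  have hn0 : (-v 0) 2 = 0 := by simp [hv]
  have hn2 : (-v 2) 2 = 0 := by simp [hv]
  obtain ⟨e, he, H⟩ := main_integral (sub_pos.2 hl1) (sub_pos.2 hl) hn0 (hv 1) (hv 0) hn2
    (by rw [cross2_neg_left]; exact hc _ _ (by decide))
    (by rw [cross2_neg_right]; exact neg_ne_zero.2 (hc _ _ (by decide))) hδ 0 1 (by decide)
  refine ⟨e, he, fun ε h0 h1 g hg => ?_⟩
  have := H ε h0 h1 g hg
  rw [cross2_neg_left, cross2_neg_right, Real.sign_neg, ← hs1, ← hs2] at this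
  have E1 : ∀ s t, seg (a 1) (v 1) t - seg (a 0) (v 0) s =
      vec (a 1 2 - a 0 2) (-v 0) (v 1) s t := by
    intro s t
    apply E3_ext <;> simp [seg, vec, hv, h01, h12] <;> ring
  have E2 : ∀ s t, seg (a 0) (v 0) s - seg (a 2) (v 2) t =
      vec (a 0 2 - a 2 2) (v 0) (-v 2) s t := by
    intro s t
    apply E3_ext <;> simp [seg, vec, hv, h01, h12] <;> ring
  unfold IX1model
  simp only [E1, E2]
  rw [this]
  ring

lemma IX3_value (a v : Fin 3 → E3) (s1 s2 s3 δ : ℝ) (hδ : 0 < δ) (h : ModelRight a v s1 s2 s3) :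
    ∃ ε₀ > (0 : ℝ), ∀ ε : ℝ, 0 < ε → ε < ε₀ → ∀ g : E3 → ℝ, IsEtaForm ε g →
      IX3model a v δ g = 1 / 2 * (s1 * s3 * ∫ y, Phi g y) := by
  obtain ⟨⟨hv, -, h01, h12, hc, hl1, hl2⟩, hl, hs1, -, hs3⟩ := h
  simp only [pr12, Prod.mk.injEq] at h01 h12
  have hn0 : (-v 0) 2 = 0 := by simp [hv]
  have hn2 : (-v 2) 2 = 0 := by simp [hv]
  obtain ⟨e, he, H⟩ := main_integral (sub_pos.2 hl) (sub_pos.2 hl2) hn0 (hv 2) (hv 1) hn2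
    (by rw [cross2_neg_left]; exact hc _ _ (by decide))
    (by rw [cross2_neg_right]; exact neg_ne_zero.2 (hc _ _ (by decide))) hδ 2 3 (by decide)
  refine ⟨e, he, fun ε h0 h1 g hg => ?_⟩
  have := H ε h0 h1 g hg
  rw [cross2_neg_left, cross2_neg_right, Real.sign_neg, ← hs1, ← hs3] at this
  have E1 : ∀ s t, seg (a 2) (v 2) t - seg (a 0) (v 0) s =
      vec (a 2 2 - a 0 2) (-v 0) (v 2) s t := by
    intro s t
    apply E3_ext <;> simp [seg, vec, hv, h01, h12] <;> ring
  have E2 : ∀ s t, seg (a 1) (v 1) s - seg (a 2) (v 2) t =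
      vec (a 1 2 - a 2 2) (v 1) (-v 2) s t := by
    intro s t
    apply E3_ext <;> simp [seg, vec, hv, h01, h12] <;> ring
  unfold IX3model
  simp only [E1, E2]
  rw [this]
  ring

/-- symmetries of the model integrals `I_X^{X′ₖ}`, `k = 1, 3`. For
all signs `s₁, s₂, s₃ ∈ {+1, -1}` and `k = 1, 3`, the model triple-point integrals
satisfy `I_X^{X′ₖ,s₁,s₂,s₃} = -I_X^{X′ₖ,s₁,-s₂,-s₃} = I_X^{X′ₖ,-s₁,-s₂,-s₃}` (the
integral `I_X^{X′₁}` being associated to models of type `←` and `I_X^{X′₃}` to models of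
type `→`). -/
theorem statement13 (s1 s2 s3 : ℝ) (h1 : s1 = 1 ∨ s1 = -1) (h2 : s2 = 1 ∨ s2 = -1)
    (h3 : s3 = 1 ∨ s3 = -1) :
    (∀ (a v a' v' a'' v'' : Fin 3 → E3) (δ δ' δ'' : ℝ), 0 < δ → 0 < δ' → 0 < δ'' →
      ModelLeft a v s1 s2 s3 → ModelLeft a' v' s1 (-s2) (-s3) →
      ModelLeft a'' v'' (-s1) (-s2) (-s3) →
      ∃ ε₀ > (0 : ℝ), ∀ ε : ℝ, 0 < ε → ε < ε₀ → ∀ g : E3 → ℝ, IsEtaForm ε g →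
        IX1model a v δ g = -(IX1model a' v' δ' g) ∧
        IX1model a v δ g = IX1model a'' v'' δ'' g) ∧
    (∀ (a v a' v' a'' v'' : Fin 3 → E3) (δ δ' δ'' : ℝ), 0 < δ → 0 < δ' → 0 < δ'' →
      ModelRight a v s1 s2 s3 → ModelRight a' v' s1 (-s2) (-s3) →
      ModelRight a'' v'' (-s1) (-s2) (-s3) →
      ∃ ε₀ > (0 : ℝ), ∀ ε : ℝ, 0 < ε → ε < ε₀ → ∀ g : E3 → ℝ, IsEtaForm ε g →
        IX3model a v δ g = -(IX3model a' v' δ' g) ∧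
        IX3model a v δ g = IX3model a'' v'' δ'' g) := by
  constructor
  · intro a v a' v' a'' v'' δ δ' δ'' hδ hδ' hδ'' m m' m''
    obtain ⟨e, he, H⟩ := IX1_value a v _ _ _ δ hδ m
    obtain ⟨e', he', H'⟩ := IX1_value a' v' _ _ _ δ' hδ' m'
    obtain ⟨e'', he'', H''⟩ := IX1_value a'' v'' _ _ _ δ'' hδ'' m''
    refine ⟨min e (min e' e''), lt_min he (lt_min he' he''), fun ε h0 hε g hg => ?_⟩
    simp only [lt_min_iff] at hε
    rw [H ε h0 hε.1 g hg, H' ε h0 hε.2.1 g hg, H'' ε h0 hε.2.2 g hg]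
    constructor <;> ring
  · intro a v a' v' a'' v'' δ δ' δ'' hδ hδ' hδ'' m m' m''
    obtain ⟨e, he, H⟩ := IX3_value a v _ _ _ δ hδ m
    obtain ⟨e', he', H'⟩ := IX3_value a' v' _ _ _ δ' hδ' m'
    obtain ⟨e'', he'', H''⟩ := IX3_value a'' v'' _ _ _ δ'' hδ'' m''
    refine ⟨min e (min e' e''), lt_min he (lt_min he' he''), fun ε h0 hε g hg => ?_⟩
    simp only [lt_min_iff] at hε
    rw [H ε h0 hε.1 g hg, H' ε h0 hε.2.1 g hg, H'' ε h0 hε.2.2 g hg]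
    constructor <;> ring
end
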